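/- arXiv:2503.24303 — 2 statements merged into one kernel-verified Lean document; each statement's English description precedes it below -/
import Mathlib

section
/- Let C be a linear code of length n over F_q with dimension k, generator matrix G, and parity check matrix H. Then C contains no nontrivial reversible subcode (i.e., the only reversible subcode of C is {0}) if and only if rank(H·J_n·G^T) = k. -/
/-! The kernel of `H * J * Gᵀ` measures `C ∩ reversedCode C`.  Indeed `x ↦ Gᵀ x` is an isomorphism
from `F ^ k` onto `C`, multiplication by `J` reverses a vector, and `H v = 0` means `v ∈ C`
(`mulVec_parity_eq_zero_iff`, a dimension count), so `x` lies in the kernel exactly when the codeword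
`Gᵀ x` and its reversal both lie in `C`.  Reversal being an involution, `C ∩ reversedCode C` is
reversible, and it contains every reversible subcode of `C`.  Hence there is no nontrivial reversible
subcode iff the kernel is zero, that is, by rank-nullity, iff the rank is `k`. -/

open Matrix

/-- Euclidean dual of a linear code of length `n`. -/
def dualCode {F : Type*} [Field F] {n : ℕ} (CC : Submodule F (Fin n → F)) :
    Submodule F (Fin n → F) where
  carrier := {v | ∀ c ∈ CC, ∑ i, c i * v i = 0}
  zero_mem' := by intro c hc; simp
  add_mem' := by
    intro a b ha hb c hc
    simp only [Set.mem_setOf_eq] at *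
    simp only [Pi.add_apply, mul_add, Finset.sum_add_distrib, ha c hc, hb c hc, add_zero]
  smul_mem' := by
    intro r v hv c hc
    simp only [Set.mem_setOf_eq] at *
    have h1 : ∀ i, c i * (r • v) i = r * (c i * v i) := by
      intro i; simp only [Pi.smul_apply, smul_eq_mul]; ring
    simp only [h1, ← Finset.mul_sum, hv c hc, mul_zero]

/-- `G` is a generator matrix of the code `CC`: its rows form a basis of `CC`. -/
def IsGenMat (F : Type*) [Field F] {k n : ℕ} (CC : Submodule F (Fin n → F))
    (G : Matrix (Fin k) (Fin n) F) : Prop :=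
  LinearIndependent F (fun i => G i) ∧ Submodule.span F (Set.range (fun i => G i)) = CC

/-- the `n × n` backward identity (anti-diagonal) matrix. -/
def Jmat (F : Type*) [Field F] (n : ℕ) : Matrix (Fin n) (Fin n) F :=
  (1 : Matrix (Fin n) (Fin n) F).submatrix id Fin.rev

/-- the reversed code of `CC`: reverse the coordinates of every codeword. -/
def reversedCode {F : Type*} [Field F] {n : ℕ} (CC : Submodule F (Fin n → F)) :
    Submodule F (Fin n → F) :=
  CC.map (LinearMap.funLeft F F Fin.rev)

theorem mulVec_Jmat {F : Type*} [Field F] {n : ℕ} (v : Fin n → F) :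
    Jmat F n *ᵥ v = fun i => v (Fin.rev i) := by
  ext i
  have h : ∀ j : Fin n, (i = Fin.rev j) ↔ (Fin.rev i = j) := fun j => by
    rw [← Fin.rev_inj, Fin.rev_rev]
  simp [Jmat, mulVec, dotProduct, Matrix.one_apply, h]

theorem mulVec_parity_of_mem {F : Type*} [Field F] {n m : ℕ} {CC : Submodule F (Fin n → F)}
    {H : Matrix (Fin m) (Fin n) F} (hH : IsGenMat F (dualCode CC) H)
    {v : Fin n → F} (hv : v ∈ CC) : H *ᵥ v = 0 := by
  ext i
  have h : H i ∈ dualCode CC := hH.2 ▸ Submodule.subset_span ⟨i, rfl⟩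
  simpa [mulVec, dotProduct, mul_comm] using h v hv

/-- A parity check matrix cuts out exactly the code: `C` lies in the kernel of `H`, and both have
dimension `k`.  This is the equality of `C` with its double dual. -/
theorem mulVec_parity_eq_zero_iff {F : Type*} [Field F] {n k : ℕ} {CC : Submodule F (Fin n → F)}
    (hk : Module.finrank F CC = k) {H : Matrix (Fin (n - k)) (Fin n) F}
    (hH : IsGenMat F (dualCode CC) H) (v : Fin n → F) : H *ᵥ v = 0 ↔ v ∈ CC := by
  have hle : CC ≤ LinearMap.ker H.mulVecLin := fun w hw => by
    simpa using mulVec_parity_of_mem hH hw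
  have hkn : k ≤ n := by
    simpa [hk] using Submodule.finrank_le CC
  have hrank : H.rank = n - k := by
    simpa using LinearIndependent.rank_matrix hH.1
  have hnull := LinearMap.finrank_range_add_finrank_ker H.mulVecLin
  change H.rank + _ = _ at hnull
  rw [hrank, Module.finrank_fin_fun] at hnull
  have heq : CC = LinearMap.ker H.mulVecLin :=
    Submodule.eq_of_le_of_finrank_eq hle (by omega)
  rw [heq]
  simp

theorem exists_mulVec_transpose_iff {F : Type*} [Field F] {n k : ℕ} {CC : Submodule F (Fin n → F)}
    {G : Matrix (Fin k) (Fin n) F} (hG : IsGenMat F CC G) (v : Fin n → F) :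
    (∃ x, Gᵀ *ᵥ x = v) ↔ v ∈ CC := by
  rw [← hG.2]
  change _ ↔ v ∈ Submodule.span F (Set.range Gᵀ.col)
  rw [← Matrix.range_mulVecLin]
  rfl

theorem rank_eq_card_iff {F : Type*} [Field F] {m k : ℕ} (A : Matrix (Fin m) (Fin k) F) :
    A.rank = k ↔ ∀ x, A *ᵥ x = 0 → x = 0 := by
  have h := LinearMap.finrank_range_add_finrank_ker A.mulVecLin
  change A.rank + _ = _ at h
  rw [Module.finrank_fin_fun] at h
  have h0 : A.rank = k ↔ Module.finrank F (LinearMap.ker A.mulVecLin) = 0 := by omega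
  rw [h0, Submodule.finrank_eq_zero, LinearMap.ker_eq_bot']
  rfl

/-- The right-hand side says `C ∩ reversedCode C = 0`; that intersection is the largest reversible
subcode of `C`. -/
theorem reversible_subcodes_trivial_iff {F : Type*} [Field F] {n : ℕ}
    (CC : Submodule F (Fin n → F)) :
    (∀ S : Submodule F (Fin n → F), S ≤ CC → reversedCode S = S → S = ⊥) ↔
      ∀ v ∈ CC, (fun i => v (Fin.rev i)) ∈ CC → v = 0 := by
  constructor
  · intro h v hv hrv
    have hbot := h (CC ⊓ CC.comap (LinearMap.funLeft F F Fin.rev)) inf_le_left ?_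
    · rw [← Submodule.mem_bot F, ← hbot]
      exact ⟨hv, hrv⟩
    have hinv : ∀ w : Fin n → F,
        LinearMap.funLeft F F Fin.rev (LinearMap.funLeft F F Fin.rev w) = w := fun w => by
      ext i
      simp [LinearMap.funLeft_apply]
    ext w
    constructor
    · rintro ⟨u, ⟨hu, hru⟩, rfl⟩
      exact ⟨hru, by simpa [hinv] using hu⟩
    · rintro ⟨hw, hrw⟩
      exact ⟨_, ⟨hrw, by simpa [hinv] using hw⟩, hinv w⟩
  · intro h S hS hrev
    rw [Submodule.eq_bot_iff]
    intro v hv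
    exact h v (hS hv) (hS (hrev ▸ Submodule.mem_map_of_mem hv))

/-- Let `C` be a linear code of length `n` over the finite field `F` with
dimension `k`, generator matrix `G` and parity check matrix `H`.  Then the only reversible
subcode of `C` is `{0}` if and only if `rank (H * Jₙ * Gᵀ) = k`. -/
theorem stmt5 {F : Type*} [Field F] [Fintype F] {n k : ℕ}
    (CC : Submodule F (Fin n → F)) (hk : Module.finrank F CC = k)
    (G : Matrix (Fin k) (Fin n) F) (H : Matrix (Fin (n - k)) (Fin n) F)
    (hG : IsGenMat F CC G) (hH : IsGenMat F (dualCode CC) H) :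
    (∀ S : Submodule F (Fin n → F), S ≤ CC → reversedCode S = S → S = ⊥) ↔
      (H * Jmat F n * G.transpose).rank = k := by
  rw [reversible_subcodes_trivial_iff, rank_eq_card_iff]
  have key : ∀ x, (H * Jmat F n * Gᵀ) *ᵥ x = 0 ↔ (fun i => (Gᵀ *ᵥ x) (Fin.rev i)) ∈ CC := fun x => by
    rw [← mulVec_parity_eq_zero_iff hk hH, ← mulVec_Jmat, mulVec_mulVec, mulVec_mulVec]
  have hinj : Function.Injective Gᵀ.mulVec := Matrix.mulVec_injective_iff.mpr hG.1
  constructor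
  · intro h x hx
    apply hinj
    rw [mulVec_zero]
    exact h _ ((exists_mulVec_transpose_iff hG _).1 ⟨x, rfl⟩) ((key x).1 hx)
  · intro h v hv hrv
    obtain ⟨x, rfl⟩ := (exists_mulVec_transpose_iff hG v).2 hv
    rw [h x ((key x).2 hrv), mulVec_zero]
end

section
/- Let C_1 and C_2 be Λ-MT codes over F_q with index ℓ, block lengths (m_1,…,m_ℓ), GPMs G_1, G_2 and identical-equation matrices A_1, A_2. Assume each m_i is coprime to q, and factor x^N − 1 = p_1(x)·p_2(x)⋯p_s(x) into (necessarily distinct) irreducible polynomials over F_q, where N = lcm(t_1 m_1,…,t_ℓ m_ℓ) (t_i the multiplicative order of λ_i). For each j, let r_j be the rank over the field F_q[x]/⟨p_j(x)⟩ of the matrix G_2·diag((x^N−1)/(x^{m_i}−λ_i))·A_1 reduced modulo p_j(x). Then C_1 ∩ C_2 = {0} if and only if Σ_{j=1}^s r_j·deg(p_j(x)) = dim(C_2). -/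
/-!
Put `P = x^N - 1`, `D = diag(x^{m i} - λᵢ)`, `E = diag(P / (x^{m i} - λᵢ))`, so `D E = P`, and let
`Mᵢ` be the row space of `Gᵢ`, which is the preimage of `Cᵢ` under the surjection `toCode`.  From
`A₁ G₁ = D` one gets `(E A₁) G₁ = P` and `G₁ (E A₁) = P`, whence (`mem_rows_iff`)
`v ∈ M₁` if and only if `P` divides every entry of `v E A₁`.

Therefore the map `u ↦ u G₂ E A₁ mod P` has the same kernel as `u ↦ toCode (u G₂)` followed by
reduction modulo `C₁`.  The latter has image `C₂ / (C₁ ∩ C₂)`, of dimension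
`dim C₂ - dim (C₁ ∩ C₂)` (`finrank_range_add_inf`).  Coprimality of the `m i` to `q` makes `P`
squarefree, so by the Chinese remainder theorem the image of the former is the product over `j` of
the row spaces of the reductions modulo `pⱼ`, of dimension `∑ rⱼ deg pⱼ` (`finrank_range_redMap`).
Hence `∑ rⱼ deg pⱼ + dim (C₁ ∩ C₂) = dim C₂`, which gives the equivalence.
-/


open Polynomial Matrix

/-- constacyclic shift with constant `lam` on one block of length `m`:
`(a₀, …, a_{m-1}) ↦ (lam * a_{m-1}, a₀, …, a_{m-2})`. -/
def blockShift {F : Type*} [Field F] (lam : F) {m : ℕ} (a : Fin m → F) : Fin m → F :=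
  fun j => if j.val = 0 then lam * a ⟨m - 1, by have := j.isLt; omega⟩
           else a ⟨j.val - 1, by have := j.isLt; omega⟩

/-- `CC ⊆ ⊕ᵢ F^{m i}` is a Λ-multi-twisted code: it is invariant under the blockwise
constacyclic shift `T_Λ`. -/
def IsMT {F : Type*} [Field F] {ℓ : ℕ} (lam : Fin ℓ → F) {m : Fin ℓ → ℕ}
    (CC : Submodule F (∀ i, Fin (m i) → F)) : Prop :=
  ∀ v ∈ CC, (fun i => blockShift (lam i) (v i)) ∈ CC

/-- from a polynomial vector in `(F[x])^ℓ` to a blocked vector: reduce component `i`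
modulo `x^{m i} - λᵢ` and take the coefficients. -/
noncomputable def toCode {F : Type*} [Field F] {ℓ : ℕ} (lam : Fin ℓ → F) (m : Fin ℓ → ℕ)
    (q : Fin ℓ → Polynomial F) : ∀ i, Fin (m i) → F :=
  fun i j => ((q i) %ₘ (X ^ (m i) - Polynomial.C (lam i))).coeff j

/-- `G` is a generator polynomial matrix (GPM) of the Λ-MT code `CC`: its rows form a
minimal generating set (equivalently, since the corresponding submodule of `(F[x])^ℓ` has
rank `ℓ`, a linearly independent generating set) of the `F[x]`-submodule of `(F[x])^ℓ`
corresponding to `CC`, namely `{q | toCode lam m q ∈ CC}`. -/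
def IsGPM {F : Type*} [Field F] {ℓ : ℕ} (lam : Fin ℓ → F) (m : Fin ℓ → ℕ)
    (CC : Submodule F (∀ i, Fin (m i) → F))
    (G : Matrix (Fin ℓ) (Fin ℓ) (Polynomial F)) : Prop :=
  LinearIndependent (Polynomial F) (fun i => G i) ∧
  (Submodule.span (Polynomial F) (Set.range (fun i => G i)) :
      Set (Fin ℓ → Polynomial F)) = {q | toCode lam m q ∈ CC}

/-- If `g` has the kernel of `f` followed by reduction modulo `C`, then its image is isomorphic to
`range f / (range f ∩ C)`. -/
lemma finrank_range_add_inf {F U V W : Type*} [Field F] [AddCommGroup U] [Module F U]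
    [AddCommGroup V] [Module F V] [FiniteDimensional F V] [AddCommGroup W] [Module F W]
    (f : U →ₗ[F] V) (g : U →ₗ[F] W) (CC : Submodule F V)
    (h : ∀ u, g u = 0 ↔ f u ∈ CC) :
    Module.finrank F (LinearMap.range g) +
      Module.finrank F (CC ⊓ LinearMap.range f : Submodule F V) =
      Module.finrank F (LinearMap.range f) := by
  have hker : LinearMap.ker g = LinearMap.ker (CC.mkQ ∘ₗ f) := by
    ext u; simp [h]
  have e1 := (g.quotKerEquivRange).finrank_eq
  have e2 := ((CC.mkQ ∘ₗ f).quotKerEquivRange).finrank_eq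
  rw [← hker, e1] at e2
  have e3 := (CC.mkQ.domRestrict (LinearMap.range f)).finrank_range_add_finrank_ker
  have e4 : LinearMap.range (CC.mkQ.domRestrict (LinearMap.range f)) =
      LinearMap.range (CC.mkQ ∘ₗ f) := by
    rw [LinearMap.range_domRestrict, LinearMap.range_comp]
  have e5 : LinearMap.ker (CC.mkQ.domRestrict (LinearMap.range f)) =
      CC.submoduleOf (LinearMap.range f) := by
    ext; simp [Submodule.submoduleOf]
  have e6 : (CC.submoduleOf (LinearMap.range f)).map (LinearMap.range f).subtype =
      CC ⊓ LinearMap.range f := by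
    rw [Submodule.submoduleOf, Submodule.map_comap_subtype, inf_comm]
  rw [e4, e5, ← e2] at e3
  rw [← e3, ← e6, Submodule.finrank_map_subtype_eq]

/-- Right multiplication by the reduction of `B` modulo `p`, on row vectors over `F[x]/⟨p⟩`,
regarded as an `F`-linear map. -/
noncomputable def redMul {F : Type*} [Field F] {ℓ : ℕ} (B : Matrix (Fin ℓ) (Fin ℓ) F[X])
    (p : F[X]) :
    (Fin ℓ → F[X] ⧸ Ideal.span {p}) →ₗ[F] (Fin ℓ → F[X] ⧸ Ideal.span {p}) :=
  ((B.map (Ideal.Quotient.mk (Ideal.span {p}))).vecMulLinear).restrictScalars F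

/-- The map `u ↦ (u B mod pⱼ)ⱼ`, with the `j`-th component taken in the row space of `B mod pⱼ`. -/
noncomputable def redMap {F : Type*} [Field F] {ℓ s : ℕ} (B : Matrix (Fin ℓ) (Fin ℓ) F[X])
    (pf : Fin s → F[X]) :
    (Fin ℓ → F[X]) →ₗ[F] (∀ j, LinearMap.range (redMul B (pf j))) :=
  LinearMap.pi fun j => (redMul B (pf j)).rangeRestrict ∘ₗ
    (Ideal.Quotient.mkₐ F (Ideal.span {pf j})).toLinearMap.compLeft (Fin ℓ)

lemma redMul_mk {F : Type*} [Field F] {ℓ : ℕ} (B : Matrix (Fin ℓ) (Fin ℓ) F[X])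
    (p : F[X]) (u : Fin ℓ → F[X]) :
    redMul B p (fun i => Ideal.Quotient.mk (Ideal.span {p}) (u i)) =
      fun k => Ideal.Quotient.mk (Ideal.span {p}) ((u ᵥ* B) k) := by
  ext k
  simp [redMul, Matrix.vecMul, dotProduct]

lemma redMap_eq_zero_iff {F : Type*} [Field F] {ℓ s : ℕ} (B : Matrix (Fin ℓ) (Fin ℓ) F[X])
    (pf : Fin s → F[X]) (hco : Pairwise (Function.onFun IsCoprime pf)) (u : Fin ℓ → F[X]) :
    redMap B pf u = 0 ↔ ∀ k, ∏ j, pf j ∣ (u ᵥ* B) k := by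
  have h1 : redMap B pf u = 0 ↔ ∀ j k, pf j ∣ (u ᵥ* B) k := by
    rw [funext_iff]
    refine forall_congr' fun j => ?_
    rw [← Subtype.coe_inj]
    change redMul B (pf j) (fun i => Ideal.Quotient.mk (Ideal.span {pf j}) (u i)) = 0 ↔ _
    rw [redMul_mk, funext_iff]
    refine forall_congr' fun k => ?_
    rw [Pi.zero_apply, Ideal.Quotient.eq_zero_iff_mem, Ideal.mem_span_singleton]
  rw [h1]
  constructor
  · intro h k
    exact Fintype.prod_dvd_of_coprime hco fun j => h j k
  · intro h j k
    exact (Finset.dvd_prod_of_mem pf (Finset.mem_univ j)).trans (h k)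

lemma finrank_range_redMul {F : Type*} [Field F] {ℓ : ℕ} (B : Matrix (Fin ℓ) (Fin ℓ) F[X])
    (p : F[X]) (hp : Irreducible p) :
    Module.finrank F (LinearMap.range (redMul B p)) =
      (B.map (Ideal.Quotient.mk (Ideal.span {p}))).rank * p.natDegree := by
  have := PrincipalIdealRing.isMaximal_of_irreducible hp
  let : Field (F[X] ⧸ Ideal.span {p}) := Ideal.Quotient.field _
  have h1 : (B.map (Ideal.Quotient.mk (Ideal.span {p}))).rank =
      Module.finrank (F[X] ⧸ Ideal.span {p})
        (LinearMap.range (B.map (Ideal.Quotient.mk (Ideal.span {p}))).vecMulLinear) := by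
    rw [← Matrix.mulVecLin_transpose]
    exact (Matrix.rank_transpose _).symm
  have h2 := Module.finrank_mul_finrank F (F[X] ⧸ Ideal.span {p})
        (LinearMap.range (B.map (Ideal.Quotient.mk (Ideal.span {p}))).vecMulLinear)
  rw [h1, mul_comm, ← finrank_quotient_span_eq_natDegree (f := p)]
  exact h2.symm

/-- By the Chinese remainder theorem `redMap` is onto the product of the row spaces of the
reductions of `B`. -/
lemma finrank_range_redMap {F : Type*} [Field F] {ℓ s : ℕ} (B : Matrix (Fin ℓ) (Fin ℓ) F[X])
    (pf : Fin s → F[X]) (hirr : ∀ j, Irreducible (pf j))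
    (hco : Pairwise (Function.onFun IsCoprime pf)) :
    Module.finrank F (LinearMap.range (redMap B pf)) =
      ∑ j, (B.map (Ideal.Quotient.mk (Ideal.span {pf j}))).rank * (pf j).natDegree := by
  have hsurj : LinearMap.range (redMap B pf) = ⊤ := by
    rw [LinearMap.range_eq_top]
    intro w
    choose y hy using fun j => (redMul B (pf j)).surjective_rangeRestrict (w j)
    have hI : Pairwise (Function.onFun IsCoprime fun j => Ideal.span {pf j}) := fun a b hab =>
      (Ideal.isCoprime_span_singleton_iff _ _).2 (hco hab)
    choose u hu using fun i => Ideal.pi_quotient_surjective hI (fun j => y j i)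
    refine ⟨u, funext fun j => ?_⟩
    rw [← hy j]
    change (redMul B (pf j)).rangeRestrict
      (fun i => Ideal.Quotient.mk (Ideal.span {pf j}) (u i)) = _
    congr 1
    exact funext fun i => hu i j
  have hfin : ∀ j, Module.Finite F (F[X] ⧸ Ideal.span {pf j}) := fun j =>
    (AdjoinRoot.powerBasis (hirr j).ne_zero).finite
  have hfree : ∀ j, Module.Free F (LinearMap.range (redMul B (pf j))) := fun j =>
    Module.Free.of_divisionRing _ _
  rw [hsurj, finrank_top, Module.finrank_pi_fintype]
  exact Finset.sum_congr rfl fun j _ => finrank_range_redMul B (pf j) (hirr j)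

/-- `toCode` as an `F`-linear map. -/
noncomputable def toCodeHom {F : Type*} [Field F] {ℓ : ℕ} (lam : Fin ℓ → F) (m : Fin ℓ → ℕ) :
    (Fin ℓ → F[X]) →ₗ[F] (∀ i, Fin (m i) → F) where
  toFun := toCode lam m
  map_add' u v := by
    ext i j; simp [toCode, add_modByMonic]
  map_smul' c v := by
    ext i j; simp [toCode, smul_modByMonic]

lemma toCode_surjective {F : Type*} [Field F] {ℓ : ℕ} (lam : Fin ℓ → F) (m : Fin ℓ → ℕ)
    (hm : ∀ i, 0 < m i) : Function.Surjective (toCode lam m) := by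
  intro w
  refine ⟨fun i => ∑ j : Fin (m i), monomial j.val (w i j), ?_⟩
  ext i j
  have hdeg : (∑ j : Fin (m i), monomial j.val (w i j)).degree <
      (X ^ (m i) - C (lam i) : F[X]).degree := by
    rw [degree_X_pow_sub_C (hm i)]
    refine (degree_sum_le _ _).trans_lt ?_
    rw [Finset.sup_lt_iff (WithBot.bot_lt_coe _)]
    intro k _
    exact (degree_monomial_le _ _).trans_lt (by exact_mod_cast k.isLt)
  simp only [toCode]
  rw [(modByMonic_eq_self_iff (monic_X_pow_sub_C _ (hm i).ne')).2 hdeg, finsetSum_coeff]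
  simp [coeff_monomial, Fin.val_inj]

/-- If `A G = D` and `D E = P` with `P ≠ 0`, then `G` and `E A` are inverse to each other up to the
factor `P`, so that membership in the row space of `G` is divisibility by `P` after
multiplication by `E A`. -/
lemma mem_rows_iff {R : Type*} [CommRing R] [IsDomain R] {ℓ : ℕ}
    (G A : Matrix (Fin ℓ) (Fin ℓ) R) (d e : Fin ℓ → R) (P : R) (hP : P ≠ 0)
    (hA : A * G = Matrix.diagonal d) (hde : ∀ i, d i * e i = P) (v : Fin ℓ → R) :
    v ∈ Submodule.span R (Set.range fun i => G i) ↔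
      ∀ k, P ∣ (v ᵥ* (Matrix.diagonal e * A)) k := by
  have hED : Matrix.diagonal e * A * G = P • (1 : Matrix (Fin ℓ) (Fin ℓ) R) := by
    rw [Matrix.mul_assoc, hA, Matrix.diagonal_mul_diagonal, Matrix.smul_one_eq_diagonal]
    exact congrArg _ (funext fun i => by rw [mul_comm, hde])
  have hdet : G.det ≠ 0 := by
    intro h0
    have := congrArg Matrix.det hED
    rw [Matrix.det_mul, h0, mul_zero, Matrix.det_smul, Matrix.det_one, mul_one] at this
    exact pow_ne_zero _ hP this.symm
  have hGE : G * (Matrix.diagonal e * A) = P • (1 : Matrix (Fin ℓ) (Fin ℓ) R) := by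
    -- `G (E A) G = P G`, and `G` can be cancelled on the right.
    have h1 : (G * (Matrix.diagonal e * A) - P • 1) * G = 0 := by
      rw [Matrix.sub_mul, Matrix.mul_assoc, hED]; simp
    have h2 := congrArg (· * G.adjugate) h1
    simp only [Matrix.mul_assoc, Matrix.mul_adjugate, Matrix.zero_mul, Matrix.mul_smul,
      Matrix.mul_one] at h2
    exact sub_eq_zero.1 ((smul_eq_zero.1 h2).resolve_left hdet)
  have hspan : v ∈ Submodule.span R (Set.range fun i => G i) ↔ ∃ w, w ᵥ* G = v := by
    have := range_vecMulLinear G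
    change v ∈ Submodule.span R (Set.range G.row) ↔ _
    rw [← this]; rfl
  rw [hspan]
  constructor
  · rintro ⟨w, rfl⟩ k
    rw [Matrix.vecMul_vecMul, hGE]
    simp [Matrix.vecMul_smul]
  · intro h
    choose w hw using h
    refine ⟨w, ?_⟩
    have h1 : v ᵥ* (Matrix.diagonal e * A) = P • w := funext hw
    have h2 := congrArg (· ᵥ* G) h1
    simp only [Matrix.vecMul_vecMul, hED, Matrix.vecMul_smul, Matrix.vecMul_one,
      Matrix.smul_vecMul] at h2
    exact (smul_right_injective _ hP h2).symm

/-- The `λ i` have order dividing `q - 1`, so `N` is coprime to `q`. -/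
lemma natCast_lcm_ne_zero {F : Type*} [Field F] [Fintype F] {ℓ : ℕ} {m : Fin ℓ → ℕ}
    {lam : Fin ℓ → F} (hlam : ∀ i, lam i ≠ 0)
    (hcop : ∀ i, Nat.Coprime (m i) (Fintype.card F)) :
    ((Finset.univ.lcm (fun i => orderOf (lam i) * m i) : ℕ) : F) ≠ 0 := by
  have hN : Nat.Coprime (Finset.univ.lcm (fun i => orderOf (lam i) * m i)) (Fintype.card F) := by
    refine Nat.Coprime.of_dvd_left (Finset.lcm_dvd_prod _ _) (Nat.Coprime.prod_left fun i _ => ?_)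
    refine Nat.Coprime.mul_left ?_ (hcop i)
    refine Nat.Coprime.of_dvd_left
      (orderOf_dvd_of_pow_eq_one (FiniteField.pow_card_sub_one_eq_one (lam i) (hlam i))) ?_
    exact (Nat.coprime_self_sub_left Fintype.card_pos).2 (Nat.coprime_one_left _)
  intro h0
  have h1 := (CharP.cast_eq_zero_iff F (ringChar F) _).1 h0
  have h2 := (CharP.cast_eq_zero_iff F (ringChar F) _).1 (Nat.cast_card_eq_zero F)
  have h3 := Nat.dvd_gcd h1 h2
  rw [hN] at h3
  exact CharP.ringChar_ne_one (Nat.dvd_one.1 h3)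

/-- Let `C₁, C₂` be Λ-MT codes with GPMs `G₁, G₂` and identical-equation
matrices `A₁, A₂`, each `mᵢ` coprime to `q`, and factor `x^N - 1 = ∏ⱼ pⱼ(x)` into
irreducible polynomials over `F_q`, where `N = lcm(tᵢ mᵢ)`.  Let `rⱼ` be the rank over
`F_q[x]/⟨pⱼ⟩` of `G₂·diag((x^N-1)/(x^{mᵢ}-λᵢ))·A₁` reduced mod `pⱼ`.  Then
`C₁ ∩ C₂ = {0}` iff `∑ⱼ rⱼ·deg pⱼ = dim C₂`. -/
theorem stmt13 {F : Type*} [Field F] [Fintype F] {ℓ : ℕ} {m : Fin ℓ → ℕ}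
    (hm : ∀ i, 0 < m i) {lam : Fin ℓ → F} (hlam : ∀ i, lam i ≠ 0)
    (C₁ C₂ : Submodule F (∀ i, Fin (m i) → F))
    (hC₁ : IsMT lam C₁) (hC₂ : IsMT lam C₂)
    (G₁ G₂ A₁ A₂ : Matrix (Fin ℓ) (Fin ℓ) (Polynomial F))
    (hG₁ : IsGPM lam m C₁ G₁) (hG₂ : IsGPM lam m C₂ G₂)
    (hA₁ : A₁ * G₁ = Matrix.diagonal (fun i => X ^ (m i) - Polynomial.C (lam i)))
    (hA₂ : A₂ * G₂ = Matrix.diagonal (fun i => X ^ (m i) - Polynomial.C (lam i)))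
    (hcop : ∀ i, Nat.Coprime (m i) (Fintype.card F))
    {N : ℕ} (hN : N = Finset.univ.lcm (fun i => orderOf (lam i) * m i))
    {s : ℕ} (pf : Fin s → Polynomial F) (hirr : ∀ j, Irreducible (pf j))
    (hprod : ∏ j, pf j = X ^ N - 1) :
    C₁ ⊓ C₂ = ⊥ ↔
      ∑ j, ((G₂ *
          Matrix.diagonal (fun i => (X ^ N - 1) / (X ^ (m i) - Polynomial.C (lam i))) *
          A₁).map (Ideal.Quotient.mk (Ideal.span {pf j}))).rank * (pf j).natDegree
        = Module.finrank F C₂ := by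
  have hsep : (X ^ N - 1 : F[X]).Separable := by
    rw [X_pow_sub_one_separable_iff, hN]
    exact natCast_lcm_ne_zero hlam hcop
  have hco : Pairwise (Function.onFun IsCoprime pf) := by
    intro a b hab
    refine Separable.isCoprime (hsep.of_dvd ?_)
    rw [← hprod, ← Finset.prod_pair hab]
    exact Finset.prod_dvd_prod_of_subset _ _ _ (Finset.subset_univ _)
  have hdvd : ∀ i, (X ^ (m i) - C (lam i) : F[X]) ∣ X ^ N - 1 := by
    intro i
    obtain ⟨k, hk⟩ : orderOf (lam i) * m i ∣ N := hN ▸ Finset.dvd_lcm (Finset.mem_univ i)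
    have h := sub_dvd_pow_sub_pow (X ^ (m i) : F[X]) (C (lam i)) (orderOf (lam i) * k)
    rw [← pow_mul, ← C_pow, pow_mul (lam i), pow_orderOf_eq_one, one_pow, C_1] at h
    rwa [show N = m i * (orderOf (lam i) * k) by rw [hk]; ring]
  have hde : ∀ i, (X ^ (m i) - C (lam i) : F[X]) *
      ((X ^ N - 1) / (X ^ (m i) - C (lam i))) = X ^ N - 1 := fun i =>
    EuclideanDomain.mul_div_cancel' (monic_X_pow_sub_C _ (hm i).ne').ne_zero (hdvd i)
  set e : Fin ℓ → F[X] := fun i => (X ^ N - 1) / (X ^ (m i) - C (lam i)) with he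
  let f : (Fin ℓ → F[X]) →ₗ[F] (∀ i, Fin (m i) → F) :=
    toCodeHom lam m ∘ₗ (G₂.vecMulLinear).restrictScalars F
  have hmem : ∀ v, v ∈ Submodule.span F[X] (Set.range fun i => G₂ i) ↔ toCode lam m v ∈ C₂ :=
    fun v => Set.ext_iff.1 hG₂.2 v
  have hmem' : ∀ v, (∃ u, u ᵥ* G₂ = v) ↔ toCode lam m v ∈ C₂ := by
    intro v
    rw [← hmem]
    change _ ↔ v ∈ Submodule.span F[X] (Set.range G₂.row)
    rw [← range_vecMulLinear G₂]; rfl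
  have hrange : LinearMap.range f = C₂ := by
    ext c
    constructor
    · rintro ⟨u, rfl⟩
      exact (hmem' _).1 ⟨u, rfl⟩
    · intro hc
      obtain ⟨v, rfl⟩ := toCode_surjective lam m hm c
      obtain ⟨u, rfl⟩ := (hmem' v).2 hc
      exact ⟨u, rfl⟩
  have hker : ∀ u, redMap (G₂ * Matrix.diagonal e * A₁) pf u = 0 ↔ f u ∈ C₁ := by
    intro u
    rw [redMap_eq_zero_iff _ _ hco, hprod, Matrix.mul_assoc, ← Matrix.vecMul_vecMul,
      ← mem_rows_iff G₁ A₁ _ e (X ^ N - 1) hsep.ne_zero hA₁ hde]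
    exact Set.ext_iff.1 hG₁.2 (u ᵥ* G₂)
  have key := finrank_range_add_inf
    (W := ∀ j, LinearMap.range (redMul (G₂ * Matrix.diagonal e * A₁) (pf j)))
    f (redMap (G₂ * Matrix.diagonal e * A₁) pf) C₁ hker
  rw [hrange, finrank_range_redMap _ pf hirr hco] at key
  rw [← Submodule.finrank_eq_zero (R := F)]
  omega
end
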